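/- Let a ∈ C^{0,α}(Ω̄) with a ≥ 0, α ∈ (0,1], and let q ∈ C^{0,σ}(Ω̄) with σ ∈ (0,1] and q(x) ≥ p₀ > 1 bounded above. Fix a ball B ⊂ Ω and set q₂ = sup_B q. Then the function ã(x) = (a(x))^{q₂/q(x)} is Hölder continuous on B with exponent β = min{α,σ}, i.e. ã ∈ C^{0,β}(B). -/

import Mathlib

open MeasureTheory Metric Set

noncomputable section

/-- Euclidean space `ℝⁿ`. -/
abbrev En (n : ℕ) : Type := EuclideanSpace ℝ (Fin n)

/-!
The map `(u, s) ↦ u ^ s` is Lipschitz on `[0, A] × [1, S]`. In the variable `u` this uses `1 ≤ s`;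
in the variable `s` the derivative is `u ^ s * log u`, where the logarithmic singularity at `u = 0`
is absorbed by one factor `u`, again because `1 ≤ s`. Composing with the Hölder continuous map
`x ↦ (a x, q₂ / q x)`, which takes values in such a rectangle, gives the result.
-/

open Bornology
open scoped NNReal

section Lipschitz

variable {A S u s : ℝ}

lemma abs_rpow_mul_log_le_rpow_add_one (hA : 1 ≤ A) (hu : u ∈ Icc 0 A) (hs : 1 ≤ s) :
    |u ^ s * Real.log u| ≤ A ^ (s + 1) := by
  rcases hu.1.eq_or_lt with rfl | hu₀
  · simpa using Real.rpow_nonneg (zero_le_one.trans hA) (s + 1)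
  rcases le_total u 1 with hu₁ | hu₁
  · calc |u ^ s * Real.log u| = u ^ (s - 1) * |Real.log u * u| := by
          rw [Real.rpow_sub_one hu₀.ne', abs_mul, abs_mul, abs_of_pos hu₀,
            abs_of_nonneg (Real.rpow_nonneg hu.1 s)]
          field_simp
      _ ≤ 1 * 1 := by
          gcongr
          · exact Real.rpow_le_one hu.1 hu₁ (sub_nonneg.2 hs)
          · exact (Real.abs_log_mul_self_lt u hu₀ hu₁).le
      _ ≤ A ^ (s + 1) := by simpa using Real.one_le_rpow hA (by linarith)
  · calc |u ^ s * Real.log u| = u ^ s * Real.log u :=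
          abs_of_nonneg (mul_nonneg (Real.rpow_nonneg hu.1 s) (Real.log_nonneg hu₁))
      _ ≤ u ^ s * u := by gcongr; exact Real.log_le_self hu.1
      _ = u ^ (s + 1) := (Real.rpow_add_one hu₀.ne' s).symm
      _ ≤ A ^ (s + 1) := Real.rpow_le_rpow hu.1 hu.2 (by linarith)

lemma lipschitzOnWith_rpow_const (hs : 1 ≤ s) :
    LipschitzOnWith (s * A ^ (s - 1)).toNNReal (fun u : ℝ ↦ u ^ s) (Icc 0 A) := by
  refine (convex_Icc 0 A).lipschitzOnWith_of_nnnorm_hasDerivWithin_le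
    (fun u _ ↦ (Real.hasDerivAt_rpow_const (Or.inr hs)).hasDerivWithinAt) fun u hu ↦ ?_
  have h_deriv : 0 ≤ s * u ^ (s - 1) :=
    mul_nonneg (zero_le_one.trans hs) (Real.rpow_nonneg hu.1 _)
  rw [← norm_toNNReal, Real.norm_of_nonneg h_deriv]
  gcongr
  exacts [hu.1, hu.2]

lemma lipschitzOnWith_const_rpow (hA : 1 ≤ A) (hu : u ∈ Icc 0 A) :
    LipschitzOnWith (A ^ (S + 1)).toNNReal (fun s : ℝ ↦ u ^ s) (Icc 1 S) := by
  refine (convex_Icc 1 S).lipschitzOnWith_of_nnnorm_hasDerivWithin_le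
    (f' := fun s ↦ u ^ s * Real.log u) (fun s hs ↦ ?_) fun s hs ↦ ?_
  · rcases hu.1.eq_or_lt with rfl | hu₀
    · have h_zero : ∀ t ∈ Icc 1 S, (0 : ℝ) ^ t = 0 := fun t ht ↦
        Real.zero_rpow (zero_lt_one.trans_le ht.1).ne'
      simpa using (hasDerivWithinAt_const s (Icc 1 S) (0 : ℝ)).congr h_zero (h_zero s hs)
    · exact (Real.hasStrictDerivAt_const_rpow hu₀ s).hasDerivAt.hasDerivWithinAt
  · rw [← norm_toNNReal, Real.norm_eq_abs]
    refine Real.toNNReal_le_toNNReal <|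
      (abs_rpow_mul_log_le_rpow_add_one hA hu hs.1).trans <|
        Real.rpow_le_rpow_of_exponent_le hA ?_
    linarith [hs.2]

lemma lipschitzOnWith_prod {X Y Z : Type*} [PseudoEMetricSpace X] [PseudoEMetricSpace Y]
    [PseudoEMetricSpace Z] {f : X × Y → Z} {s : Set X} {t : Set Y} {K L : ℝ≥0}
    (hX : ∀ y ∈ t, LipschitzOnWith K (fun x ↦ f (x, y)) s)
    (hY : ∀ x ∈ s, LipschitzOnWith L (fun y ↦ f (x, y)) t) :
    LipschitzOnWith (K + L) f (s ×ˢ t) := by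
  rintro ⟨x₁, y₁⟩ ⟨hx₁, hy₁⟩ ⟨x₂, y₂⟩ ⟨hx₂, hy₂⟩
  calc edist (f (x₁, y₁)) (f (x₂, y₂))
      ≤ edist (f (x₁, y₁)) (f (x₂, y₁)) + edist (f (x₂, y₁)) (f (x₂, y₂)) := edist_triangle ..
    _ ≤ K * edist x₁ x₂ + L * edist y₁ y₂ :=
        add_le_add (hX y₁ hy₁ hx₁ hx₂) (hY x₂ hx₂ hy₁ hy₂)
    _ ≤ K * edist (x₁, y₁) (x₂, y₂) + L * edist (x₁, y₁) (x₂, y₂) := by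
        gcongr
        exacts [le_max_left _ _, le_max_right _ _]
    _ = ↑(K + L) * edist (x₁, y₁) (x₂, y₂) := by rw [ENNReal.coe_add, add_mul]

lemma lipschitzOnWith_rpow (hA : 1 ≤ A) :
    LipschitzOnWith ((S * A ^ (S - 1)).toNNReal + (A ^ (S + 1)).toNNReal)
      (fun z : ℝ × ℝ ↦ z.1 ^ z.2) (Icc 0 A ×ˢ Icc 1 S) := by
  refine lipschitzOnWith_prod (fun s hs ↦ ?_) fun u hu ↦ lipschitzOnWith_const_rpow hA hu
  refine (lipschitzOnWith_rpow_const hs.1).weaken (Real.toNNReal_le_toNNReal ?_)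
  have hS : 0 ≤ S := zero_le_one.trans (hs.1.trans hs.2)
  gcongr <;> exact hs.2

lemma lipschitzOnWith_const_div {b : ℝ} (c : ℝ) (hb : 0 < b) :
    LipschitzOnWith (|c| / b ^ 2).toNNReal (fun t : ℝ ↦ c / t) (Ici b) := by
  refine LipschitzOnWith.of_dist_le' fun t ht t' ht' ↦ ?_
  have ht₀ : 0 < t := hb.trans_le ht
  have ht₀' : 0 < t' := hb.trans_le ht'
  calc dist (c / t) (c / t') = |c| / (t * t') * dist t t' := by
        rw [Real.dist_eq, Real.dist_eq, abs_sub_comm t,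
          show c / t - c / t' = c / (t * t') * (t' - t) by field_simp, abs_mul, abs_div,
          abs_of_pos (mul_pos ht₀ ht₀')]
    _ ≤ |c| / b ^ 2 * dist t t' := by
        rw [sq]
        gcongr
        exacts [ht, ht']

end Lipschitz

section Holder

lemma exists_holderOnWith_iff_norm_sub_le {E F : Type*} [SeminormedAddCommGroup E]
    [SeminormedAddCommGroup F] {f : E → F} {s : Set E} {γ : ℝ≥0} :
    (∃ C, HolderOnWith C γ f s) ↔
      ∃ M : ℝ, ∀ x ∈ s, ∀ y ∈ s, ‖f x - f y‖ ≤ M * ‖x - y‖ ^ (γ : ℝ) := by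
  simp only [← dist_eq_norm]
  refine ⟨fun ⟨C, hC⟩ ↦ ⟨C, fun x hx y hy ↦ hC.dist_le hx hy⟩,
    fun ⟨M, hM⟩ ↦ ⟨M.toNNReal, fun x hx y hy ↦ ?_⟩⟩
  rw [edist_dist, edist_dist, ENNReal.ofReal_rpow_of_nonneg dist_nonneg γ.coe_nonneg,
    ← ENNReal.ofReal, ← ENNReal.ofReal_mul' (by positivity)]
  exact ENNReal.ofReal_le_ofReal (hM x hx y hy)

lemma holderOnWith_prodMk {X Y Z : Type*} [PseudoEMetricSpace X] [PseudoEMetricSpace Y]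
    [PseudoEMetricSpace Z] {f : X → Y} {g : X → Z} {s : Set X} {C D γ : ℝ≥0}
    (hf : HolderOnWith C γ f s) (hg : HolderOnWith D γ g s) :
    HolderOnWith (max C D) γ (fun x ↦ (f x, g x)) s := fun x hx y hy ↦
  max_le (hf.mono_const (le_max_left C D) x hx y hy) (hg.mono_const (le_max_right C D) x hx y hy)

lemma lipschitzOnWith_comp_holderOnWith {X Y Z : Type*} [PseudoEMetricSpace X]
    [PseudoEMetricSpace Y] [PseudoEMetricSpace Z] {g : Y → Z} {f : X → Y} {s : Set X} {t : Set Y}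
    {K C γ : ℝ≥0} (hg : LipschitzOnWith K g t) (hf : HolderOnWith C γ f s) (hst : MapsTo f s t) :
    HolderOnWith (K * C) γ (fun x ↦ g (f x)) s := by
  simpa only [NNReal.coe_one, NNReal.rpow_one, one_mul, Function.comp_def] using
    (holderOnWith_one.2 hg).comp hf hst

variable {X : Type*} [PseudoMetricSpace X] {s : Set X}

lemma isBounded_image_of_holderOnWith {Y : Type*} [PseudoMetricSpace Y] {f : X → Y} {C γ : ℝ≥0}
    (hs : IsBounded s) (hf : HolderOnWith C γ f s) : IsBounded (f '' s) := by
  rw [isBounded_iff_ediam_ne_top] at hs ⊢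
  exact ne_top_of_le_ne_top (by finiteness) hf.ediam_image_le

lemma exists_holderOnWith_rpow {a p : X → ℝ} {α σ : ℝ≥0} (hs : IsBounded s)
    (ha_holder : ∃ C, HolderOnWith C α a s) (hp_holder : ∃ C, HolderOnWith C σ p s)
    (ha : ∀ x ∈ s, 0 ≤ a x) (hp : ∀ x ∈ s, 1 ≤ p x) :
    ∃ C, HolderOnWith C (min α σ) (fun x ↦ a x ^ p x) s := by
  obtain ⟨Ca, hCa⟩ := HolderOnWith.exists_holderOnWith_of_le ha_holder (min_le_left α σ) hs
  obtain ⟨Cp, hCp⟩ := HolderOnWith.exists_holderOnWith_of_le hp_holder (min_le_right α σ) hs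
  obtain ⟨A, hA⟩ := (isBounded_image_of_holderOnWith hs hCa).bddAbove
  obtain ⟨S, hS⟩ := (isBounded_image_of_holderOnWith hs hCp).bddAbove
  have h_maps : MapsTo (fun x ↦ (a x, p x)) s (Icc 0 (max 1 A) ×ˢ Icc 1 S) := fun x hx ↦
    ⟨⟨ha x hx, (hA (mem_image_of_mem a hx)).trans (le_max_right 1 A)⟩,
      hp x hx, hS (mem_image_of_mem p hx)⟩
  exact ⟨_, lipschitzOnWith_comp_holderOnWith (lipschitzOnWith_rpow (le_max_left 1 A))
    (holderOnWith_prodMk hCa hCp) h_maps⟩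

theorem statement8_general {a q : X → ℝ} {α σ : ℝ≥0} {p₀ : ℝ} (hs : IsBounded s) (hp₀ : 0 < p₀)
    (ha_holder : ∃ C, HolderOnWith C α a s) (hq_holder : ∃ C, HolderOnWith C σ q s)
    (ha : ∀ x ∈ s, 0 ≤ a x) (hq : ∀ x ∈ s, p₀ ≤ q x) :
    ∃ C, HolderOnWith C (min α σ) (fun x ↦ a x ^ (sSup (q '' s) / q x)) s := by
  obtain ⟨Cq, hCq⟩ := hq_holder
  have h_div := lipschitzOnWith_comp_holderOnWith
    (lipschitzOnWith_const_div (sSup (q '' s)) hp₀) hCq hq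
  refine exists_holderOnWith_rpow hs ha_holder ⟨_, h_div⟩ ha fun x hx ↦ ?_
  have h_bdd : BddAbove (q '' s) := (isBounded_image_of_holderOnWith hs hCq).bddAbove
  exact (one_le_div (hp₀.trans_le (hq x hx))).2 (le_csSup h_bdd (mem_image_of_mem q hx))

end Holder

/-- If `a ∈ C^{0,α}(Ω̄)` is nonnegative and `q ∈ C^{0,σ}(Ω̄)` is bounded between
`p₀ > 1` and `Q`, then on any ball `B ⊆ Ω`, the function `ã(x) = a(x)^{q₂/q(x)}`
(with `q₂ = sup_B q`) is Hölder continuous with exponent `β = min{α,σ}`. -/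
theorem statement8
    (n : ℕ) (hn : 2 ≤ n)
    (Ω : Set (En n)) (hΩo : IsOpen Ω) (hΩb : Bornology.IsBounded Ω)
    (a q : En n → ℝ) (α σ p₀ Q : ℝ)
    (hα : α ∈ Ioc (0:ℝ) 1) (hσ : σ ∈ Ioc (0:ℝ) 1) (hp₀ : 1 < p₀)
    (haHol : ∃ M, ∀ x ∈ closure Ω, ∀ y ∈ closure Ω, |a x - a y| ≤ M * ‖x - y‖ ^ α)
    (hqHol : ∃ M, ∀ x ∈ closure Ω, ∀ y ∈ closure Ω, |q x - q y| ≤ M * ‖x - y‖ ^ σ)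
    (ha : ∀ x ∈ closure Ω, 0 ≤ a x)
    (hq : ∀ x ∈ closure Ω, p₀ ≤ q x ∧ q x ≤ Q)
    (y : En n) (r : ℝ) (hr : 0 < r) (hB : ball y r ⊆ Ω) :
    ∃ Ca : ℝ, ∀ x ∈ ball y r, ∀ x' ∈ ball y r,
      |a x ^ (sSup (q '' ball y r) / q x) - a x' ^ (sSup (q '' ball y r) / q x')| ≤
        Ca * ‖x - x'‖ ^ min α σ := by
  lift α to ℝ≥0 using hα.1.le
  lift σ to ℝ≥0 using hσ.1.le
  have hBΩ : ball y r ⊆ closure Ω := hB.trans subset_closure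
  exact exists_holderOnWith_iff_norm_sub_le.1 <|
    statement8_general isBounded_ball (zero_lt_one.trans hp₀)
      ((exists_holderOnWith_iff_norm_sub_le.2 haHol).imp fun _ h ↦ h.mono hBΩ)
      ((exists_holderOnWith_iff_norm_sub_le.2 hqHol).imp fun _ h ↦ h.mono hBΩ)
      (fun x hx ↦ ha x (hBΩ hx)) fun x hx ↦ (hq x (hBΩ hx)).1
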